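/- Let u be a positive solution of div(|x|^{-2a}∇u) + |x|^{-bp} u^{p-1} = 0 in ℝ^d \ {0}, with a,b satisfying the admissibility conditions, and define w on (0,∞) × S^{d-1} by u(r,θ) = w(r^α, θ) in spherical coordinates. Then w is a positive solution of -𝓛w = w^{p-1} on (0,∞) × S^{d-1}, where moreover p = 2n/(n-2). -/

import Mathlib

/-!
For `b < a + 1` one has `α > 0`, and `Φ x = |x|^{α-1} x` maps the punctured space onto itself with
`u = W ∘ Φ`. The chain rule (`eLap_comp`) together with the expansion of the weighted divergence
(`divg_norm_rpow_smul_gradient`) gives, at `y = Φ x`,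
`div(|x|^{-2a} ∇u) = |x|^{-2a+2(α-1)} (𝓛W)(y)`; the first-order coefficients match because
`α (n-2) = 2 (a_c - a)`. As `-bp = -2a + 2(α-1)`, the powers of `|x|` cancel in the equation for `u`
and leave `𝓛W + W^{p-1} = 0`.

For `b = a + 1` one has `α = 0` and `n = d / 0 = 0` by the convention on division, and `p = 2n/(n-2)`
would fail. This case is vacuous: `u` is then homogeneous of degree `0`, so it attains its minimum over
the punctured space at a point of the unit sphere. There `∇u = 0` and `Δu ≥ 0`
(`eLap_nonneg_of_forall_le`), so the left-hand side of the equation is positive.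
-/

open Real MeasureTheory Metric
open scoped RealInnerProductSpace

noncomputable section

/-- `ℝ^d` with the Euclidean structure. -/
abbrev Euc (d : ℕ) := EuclideanSpace ℝ (Fin d)

/-- Divergence of a vector field on `ℝ^d`. -/
def divg {d : ℕ} (F : Euc d → Euc d) (x : Euc d) : ℝ :=
  ∑ i, ⟪fderiv ℝ F x (EuclideanSpace.single i 1), EuclideanSpace.single i 1⟫

/-- The critical parameter `a_c = (d-2)/2`. -/
def acrit (d : ℕ) : ℝ := ((d : ℝ) - 2) / 2

/-- The CKN exponent `p = 2d/(d-2+2(b-a))`. -/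
def pCKN (d : ℕ) (a b : ℝ) : ℝ := 2 * d / ((d : ℝ) - 2 + 2 * (b - a))

/-- The auxiliary parameter `α = (1+a-b)(a_c-a)/(a_c-a+b)`. -/
def alphaCKN (d : ℕ) (a b : ℝ) : ℝ := (1 + a - b) * (acrit d - a) / (acrit d - a + b)

/-- The intrinsic dimension `n = d/(1+a-b)`. -/
def nCKN (d : ℕ) (a b : ℝ) : ℝ := (d : ℝ) / (1 + a - b)

/-- The admissibility conditions on `a, b`:
`a ≤ b ≤ a+1` if `d ≥ 3`, `a < b ≤ a+1` if `d = 2`, and `a < a_c`. -/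
def Admissible (d : ℕ) (a b : ℝ) : Prop :=
  ((3 ≤ d ∧ a ≤ b ∧ b ≤ a + 1) ∨ (d = 2 ∧ a < b ∧ b ≤ a + 1)) ∧ a < acrit d

/-- `p ∈ (2, 2^*)` where `2^* = 2d/(d-2)` for `d ≥ 3` (and `2^* = +∞` for `d = 2`). -/
def PInCriticalRange (d : ℕ) (p : ℝ) : Prop :=
  2 < p ∧ (3 ≤ d → p < 2 * d / ((d : ℝ) - 2))

/-- `u` is a (classical, away from the origin) solution of
`div(|x|^{-2a} ∇u) + |x|^{-bp} u^{p-1} = 0` in `ℝ^d`. -/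
def IsCKNSolution (d : ℕ) (a b p : ℝ) (u : Euc d → ℝ) : Prop :=
  ContDiffOn ℝ (⊤ : ℕ∞) u {(0 : Euc d)}ᶜ ∧
    ∀ x : Euc d, x ≠ 0 →
      divg (fun y => (‖y‖ ^ (-(2 * a)) : ℝ) • gradient u y) x
        + ‖x‖ ^ (-(b * p)) * u x ^ (p - 1) = 0

/-- The explicit radial solution `𝒰`. -/
def UCKN (d : ℕ) (a b : ℝ) (x : Euc d) : ℝ :=
  ((d : ℝ) * (pCKN d a b - 2) * (acrit d - a) ^ 2 / (1 + a - b)) ^ (1 / (pCKN d a b - 2)) *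
    (1 + ‖x‖ ^ ((pCKN d a b - 2) * (acrit d - a))) ^ (-2 / (pCKN d a b - 2))

/-- `u` coincides with `𝒰` up to the scaling invariance `u ↦ λ^{a_c-a} u(λ ·)`. -/
def IsSolitonBubble (d : ℕ) (a b : ℝ) (u : Euc d → ℝ) : Prop :=
  ∃ lam : ℝ, 0 < lam ∧ ∀ x : Euc d, u x = lam ^ (acrit d - a) * UCKN d a b (lam • x)

/-- Membership in the local space `D^{a,b}_loc(ℝ^d)`. -/
def MemDLoc (d : ℕ) (a b p : ℝ) (u : Euc d → ℝ) : Prop :=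
  ∀ R : ℝ, 0 < R →
    IntegrableOn (fun x : Euc d => |u x| ^ p * ‖x‖ ^ (-(b * p))) (ball 0 R) volume ∧
      IntegrableOn (fun x : Euc d => ‖x‖ ^ (-(2 * a)) * ‖gradient u x‖ ^ 2) (ball 0 R) volume

/-- Membership in the energy space `D^{a,b}(ℝ^d)`. -/
def MemD (d : ℕ) (a b p : ℝ) (u : Euc d → ℝ) : Prop :=
  Integrable (fun x : Euc d => |u x| ^ p * ‖x‖ ^ (-(b * p))) volume ∧
    Integrable (fun x : Euc d => ‖x‖ ^ (-(2 * a)) * ‖gradient u x‖ ^ 2) volume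

/- Cylinder `(0,∞) × S^{d-1}` objects.  A function on the cylinder is identified with a
function on `ℝ^d \ {0}` via `(r,θ) ↦ rθ`; the angular derivatives are expressed through
the standard Euclidean decomposition in spherical coordinates. -/

/-- Radial derivative `v'` (i.e. `∂_r`) in spherical coordinates. -/
def rD {d : ℕ} (V : Euc d → ℝ) (x : Euc d) : ℝ := fderiv ℝ V x (‖x‖⁻¹ • x)

/-- Second radial derivative `v''`. -/
def rD2 {d : ℕ} (V : Euc d → ℝ) (x : Euc d) : ℝ := rD (rD V) x

/-- The Euclidean Laplacian on `ℝ^d`. -/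
def eLap {d : ℕ} (V : Euc d → ℝ) (x : Euc d) : ℝ :=
  ∑ i, fderiv ℝ (fun y => fderiv ℝ V y (EuclideanSpace.single i 1)) x (EuclideanSpace.single i 1)

/-- `Δ_θ V / r²`, via the decomposition `Δ = ∂_rr + (d-1)/r ∂_r + Δ_θ/r²`. -/
def sphLapR2 {d : ℕ} (V : Euc d → ℝ) (x : Euc d) : ℝ :=
  eLap V x - rD2 V x - ((d : ℝ) - 1) / ‖x‖ * rD V x

/-- The operator `𝓛v = α² v'' + α²(n-1) v'/r + Δ_θ v/r²`. -/
def cylL {d : ℕ} (α n : ℝ) (V : Euc d → ℝ) (x : Euc d) : ℝ :=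
  α ^ 2 * rD2 V x + α ^ 2 * (n - 1) / ‖x‖ * rD V x + sphLapR2 V x

/-- `∇_θ V / r`, realized as the tangential part of the Euclidean gradient. -/
def tGrad {d : ℕ} (V : Euc d → ℝ) (x : Euc d) : Euc d :=
  gradient V x - rD V x • (‖x‖⁻¹ • x)

/-- `|Dv|² = α² |v'|² + |∇_θ v|²/r²`. -/
def cylGradSq {d : ℕ} (α : ℝ) (V : Euc d → ℝ) (x : Euc d) : ℝ :=
  α ^ 2 * rD V x ^ 2 + ‖tGrad V x‖ ^ 2

/-- `⟨Dv, Dq⟩ = α² v' q' + ∇_θ v · ∇_θ q / r²`. -/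
def cylInnerD {d : ℕ} (α : ℝ) (V Q : Euc d → ℝ) (x : Euc d) : ℝ :=
  α ^ 2 * rD V x * rD Q x + ⟪tGrad V x, tGrad Q x⟫

/-- The Bochner quantity `𝐤[𝐩] = ½ 𝓛|D𝐩|² − ⟨D𝐩, D𝓛𝐩⟩ − (1/n)(𝓛𝐩)²`. -/
def bochK {d : ℕ} (α n : ℝ) (V : Euc d → ℝ) (x : Euc d) : ℝ :=
  (1 / 2) * cylL α n (cylGradSq α V) x - cylInnerD α V (cylL α n V) x
    - (1 / n) * cylL α n V x ^ 2

/-- The divergence `D_i (φ D_i ψ)` of the field `φ Dψ`, expressed via the Leibniz rule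
`D_i(φ D_i ψ) = ⟨Dφ, Dψ⟩ + φ 𝓛ψ`. -/
def cylDivFD {d : ℕ} (α n : ℝ) (φ ψ : Euc d → ℝ) (x : Euc d) : ℝ :=
  cylInnerD α φ ψ x + φ x * cylL α n ψ x

/-- Integral over the cylinder `(0,∞)×S^{d-1}` with respect to `dμ = r^{n-1} dr dθ`,
i.e. the weighted integral `∫ f(x) |x|^{n-d} dx` on `ℝ^d`. -/
def cylIntegral {d : ℕ} (n : ℝ) (f : Euc d → ℝ) : ℝ :=
  ∫ x : Euc d, f x * ‖x‖ ^ (n - (d : ℝ))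

/-- Integral over `(0,R)×S^{d-1}` with respect to `dμ = r^{n-1} dr dθ`. -/
def cylIntegralBall {d : ℕ} (n : ℝ) (R : ℝ) (f : Euc d → ℝ) : ℝ :=
  ∫ x in ball (0 : Euc d) R, f x * ‖x‖ ^ (n - (d : ℝ))

/-- `W` is the cylinder representation `w` of `u`, i.e. `u(r,θ) = w(r^α, θ)`. -/
def IsCylinderRep {d : ℕ} (α : ℝ) (u W : Euc d → ℝ) : Prop :=
  ContDiffOn ℝ (⊤ : ℕ∞) W {(0 : Euc d)}ᶜ ∧
    ∀ x : Euc d, x ≠ 0 → u x = W ((‖x‖ ^ (α - 1) : ℝ) • x)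

/-- The pressure function `𝐩 = (n-1) w^{-2/(n-2)}`. -/
def pressure {d : ℕ} (n : ℝ) (W : Euc d → ℝ) (x : Euc d) : ℝ :=
  (n - 1) * W x ^ (-(2 / (n - 2)))

/-- A nonnegative smooth function of the radial variable, compactly supported in `(0,∞)`. -/
def IsCutoff (η : ℝ → ℝ) : Prop :=
  ContDiff ℝ (⊤ : ℕ∞) η ∧ HasCompactSupport η ∧ tsupport η ⊆ Set.Ioi 0 ∧ ∀ r : ℝ, 0 ≤ η r

/-! ### Derivatives on the punctured space -/

theorem hasFDerivAt_norm_rpow_of_ne {d : ℕ} (β : ℝ) {x : Euc d} (hx : x ≠ 0) :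
    HasFDerivAt (fun z : Euc d => ‖z‖ ^ β) ((β * ‖x‖ ^ (β - 2)) • innerSL ℝ x) x := by
  have hr : 0 < ‖x‖ := norm_pos_iff.mpr hx
  have h1 := (hasStrictFDerivAt_norm_sq x).hasFDerivAt
  have h2 := h1.rpow_const (p := β / 2) (Or.inl (by positivity))
  have e : (fun z : Euc d => ‖z‖ ^ β) = fun z => (‖z‖ ^ 2) ^ (β / 2) := by
    funext z
    rw [← Real.rpow_natCast, ← Real.rpow_mul (norm_nonneg z)]
    congr 1; push_cast; ring
  rw [e]
  refine h2.congr_fderiv ?_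
  rw [← Real.rpow_natCast, ← Real.rpow_mul hr.le, ← Nat.cast_smul_eq_nsmul ℝ, smul_smul,
    show ((2 : ℕ) : ℝ) * (β / 2 - 1) = β - 2 by push_cast; ring]
  congr 1
  push_cast; ring

theorem hasFDerivAt_norm_rpow_smul {d : ℕ} (β : ℝ) {x : Euc d} (hx : x ≠ 0) :
    HasFDerivAt (fun z : Euc d => (‖z‖ ^ β : ℝ) • z)
      ((‖x‖ ^ β : ℝ) • ContinuousLinearMap.id ℝ (Euc d)
        + ((β * ‖x‖ ^ (β - 2)) • innerSL ℝ x).smulRight x) x :=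
  (hasFDerivAt_norm_rpow_of_ne β hx).smul (hasFDerivAt_id x)

theorem contDiffAt_of_ne {d : ℕ} {V : Euc d → ℝ}
    (hV : ContDiffOn ℝ (⊤ : ℕ∞) V {(0 : Euc d)}ᶜ) {x : Euc d} (hx : x ≠ 0) :
    ContDiffAt ℝ (⊤ : ℕ∞) V x :=
  hV.contDiffAt (isOpen_compl_singleton.mem_nhds hx)

theorem hasFDerivAt_of_ne {d : ℕ} {V : Euc d → ℝ}
    (hV : ContDiffOn ℝ (⊤ : ℕ∞) V {(0 : Euc d)}ᶜ) {x : Euc d} (hx : x ≠ 0) :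
    HasFDerivAt V (fderiv ℝ V x) x :=
  ((contDiffAt_of_ne hV hx).differentiableAt (by simp)).hasFDerivAt

theorem hasFDerivAt_fderiv_of_ne {d : ℕ} {V : Euc d → ℝ}
    (hV : ContDiffOn ℝ (⊤ : ℕ∞) V {(0 : Euc d)}ᶜ) {x : Euc d} (hx : x ≠ 0) :
    HasFDerivAt (fderiv ℝ V) (fderiv ℝ (fderiv ℝ V) x) x :=
  (((contDiffAt_of_ne hV hx).fderiv_right (m := 1) (by norm_cast)).differentiableAt
    (by simp)).hasFDerivAt

theorem fderiv_fderiv_apply {d : ℕ} {V : Euc d → ℝ}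
    (hV : ContDiffOn ℝ (⊤ : ℕ∞) V {(0 : Euc d)}ᶜ) {x : Euc d} (hx : x ≠ 0) (v w : Euc d) :
    fderiv ℝ (fun y => fderiv ℝ V y v) x w = fderiv ℝ (fderiv ℝ V) x w v := by
  rw [((hasFDerivAt_fderiv_of_ne hV hx).clm_apply (hasFDerivAt_const v x)).fderiv]
  simp

theorem eLap_eq {d : ℕ} {V : Euc d → ℝ}
    (hV : ContDiffOn ℝ (⊤ : ℕ∞) V {(0 : Euc d)}ᶜ) {x : Euc d} (hx : x ≠ 0) :
    eLap V x = ∑ i : Fin d, fderiv ℝ (fderiv ℝ V) x (EuclideanSpace.single i 1)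
      (EuclideanSpace.single i 1) :=
  Finset.sum_congr rfl fun _ _ => fderiv_fderiv_apply hV hx _ _

theorem rD_eq {d : ℕ} (V : Euc d → ℝ) (x : Euc d) : rD V x = ‖x‖⁻¹ * fderiv ℝ V x x := by
  simp [rD]

/-- The vector field `z ↦ ‖z‖⁻¹ • z` is constant along rays, so `v''` is the Hessian of `v`
evaluated twice on the radial unit vector, with no first-order term. -/
theorem rD2_eq {d : ℕ} {V : Euc d → ℝ}
    (hV : ContDiffOn ℝ (⊤ : ℕ∞) V {(0 : Euc d)}ᶜ) {x : Euc d} (hx : x ≠ 0) :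
    rD2 V x = (‖x‖ ^ 2)⁻¹ * fderiv ℝ (fderiv ℝ V) x x x := by
  have hr : 0 < ‖x‖ := norm_pos_iff.mpr hx
  have h := (hasFDerivAt_fderiv_of_ne hV hx).clm_apply (hasFDerivAt_norm_rpow_smul (-1) hx)
  have e : rD V = fun z => fderiv ℝ V z ((‖z‖ ^ (-1 : ℝ) : ℝ) • z) := by
    funext z; simp [rD, Real.rpow_neg_one]
  have h3 : ‖x‖ ^ ((-1 : ℝ) - 2) = (‖x‖ ^ 3)⁻¹ := by
    rw [show (-1 : ℝ) - 2 = -((3 : ℕ) : ℝ) by norm_num, Real.rpow_neg hr.le, Real.rpow_natCast]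
  rw [rD2, rD, e, h.fderiv]
  simp only [add_apply, ContinuousLinearMap.comp_apply,
    ContinuousLinearMap.flip_apply, smul_apply, map_smul, map_add,
    ContinuousLinearMap.smulRight_apply, innerSL_apply_apply, real_inner_self_eq_norm_sq,
    Real.rpow_neg_one, smul_eq_mul, h3, ContinuousLinearMap.id_apply]
  field_simp
  ring

/-- A linear form evaluated by expanding `x` in the standard basis; used to contract indices. -/
theorem sum_inner_mul {d : ℕ} (x : Euc d) (L : Euc d →L[ℝ] ℝ) :
    ∑ i : Fin d, ⟪x, EuclideanSpace.single i (1 : ℝ)⟫ * L (EuclideanSpace.single i 1) = L x := by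
  conv_rhs => rw [← (EuclideanSpace.basisFun (Fin d) ℝ).sum_repr x]
  simp [EuclideanSpace.inner_single_right]

/-- `div(|x|^γ ∇V) = |x|^γ ΔV + γ |x|^{γ-2} x·∇V`. -/
theorem divg_norm_rpow_smul_gradient {d : ℕ} {V : Euc d → ℝ} (γ : ℝ)
    (hV : ContDiffOn ℝ (⊤ : ℕ∞) V {(0 : Euc d)}ᶜ) {x : Euc d} (hx : x ≠ 0) :
    divg (fun y => (‖y‖ ^ γ : ℝ) • gradient V y) x
      = ‖x‖ ^ γ * eLap V x + γ * ‖x‖ ^ (γ - 2) * fderiv ℝ V x x := by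
  have hg : HasFDerivAt (gradient V) _ x :=
    ((InnerProductSpace.toDual ℝ (Euc d)).symm.toContinuousLinearEquiv.hasFDerivAt).comp x
      (hasFDerivAt_fderiv_of_ne hV hx)
  have h : HasFDerivAt (fun y => (‖y‖ ^ γ : ℝ) • gradient V y) _ x :=
    (hasFDerivAt_norm_rpow_of_ne γ hx).smul hg
  rw [divg, eLap_eq hV hx, ← sum_inner_mul x (fderiv ℝ V x), Finset.mul_sum, Finset.mul_sum,
    ← Finset.sum_add_distrib]
  refine Finset.sum_congr rfl fun i _ => ?_
  rw [h.fderiv]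
  simp [inner_add_left, inner_smul_left, inner_gradient_left]
  ring

/-! ### The radial change of variables -/

/-- Radial derivative and Laplacian of `u = W ∘ Φ` for the radial stretching
`Φ x = |x|^β x`, expressed at `y = Φ x`. Since `DΦ = |x|^β (1 + β x̂ ⊗ x̂)`, the second-order part of
`Δu` is `|x|^{2β} (ΔW + β(β+2) W'')`; the first-order part comes from
`ΔΦ = β(β+d) |x|^{β-2} x`. -/
theorem eLap_comp {d : ℕ} {u W : Euc d → ℝ} (β : ℝ)
    (hW : ContDiffOn ℝ (⊤ : ℕ∞) W {(0 : Euc d)}ᶜ)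
    (huW : ∀ x : Euc d, x ≠ 0 → u x = W ((‖x‖ ^ β : ℝ) • x)) {x y : Euc d} (hx : x ≠ 0)
    (hy : y = (‖x‖ ^ β : ℝ) • x) :
    fderiv ℝ u x x = (β + 1) * fderiv ℝ W y y ∧
    eLap u x = (‖y‖ / ‖x‖) ^ 2 * (eLap W y + β * (β + 2) * rD2 W y
      + β * (β + d) / ‖y‖ * rD W y) := by
  have hr : 0 < ‖x‖ := norm_pos_iff.mpr hx
  have hρ : 0 < ‖x‖ ^ β := Real.rpow_pos_of_pos hr β
  have hΦ : ∀ z : Euc d, z ≠ 0 → (‖z‖ ^ β : ℝ) • z ≠ 0 := fun z hz =>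
    smul_ne_zero (Real.rpow_pos_of_pos (norm_pos_iff.mpr hz) β).ne' hz
  have hy0 : y ≠ 0 := hy ▸ hΦ x hx
  have hs : ‖y‖ = ‖x‖ ^ β * ‖x‖ := by rw [hy, norm_smul, Real.norm_of_nonneg hρ.le]
  have hxy : x = (‖x‖ ^ β)⁻¹ • y := by rw [hy, smul_smul, inv_mul_cancel₀ hρ.ne', one_smul]
  have p2 : ‖x‖ ^ (β - 2) = ‖x‖ ^ β / ‖x‖ ^ 2 := by
    rw [Real.rpow_sub hr]; norm_cast
  have p4 : ‖x‖ ^ (β - 2 - 2) = ‖x‖ ^ β / ‖x‖ ^ 4 := by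
    rw [show β - 2 - 2 = β - (4 : ℕ) by push_cast; ring, Real.rpow_sub hr, Real.rpow_natCast]
  -- the chain rule for the first derivative, valid on the whole punctured space
  have h1 : ∀ z : Euc d, z ≠ 0 → ∀ v, fderiv ℝ u z v = fderiv ℝ W ((‖z‖ ^ β : ℝ) • z)
      ((‖z‖ ^ β : ℝ) • v + (β * (‖z‖ ^ (β - 2) * ⟪z, v⟫)) • z) := by
    intro z hz v
    have e : u =ᶠ[nhds z] W ∘ fun z => (‖z‖ ^ β : ℝ) • z := by
      filter_upwards [isOpen_compl_singleton.mem_nhds hz] with t ht using huW t ht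
    rw [e.fderiv_eq, ((hasFDerivAt_of_ne hW (hΦ z hz)).comp (f := fun z : Euc d => (‖z‖ ^ β : ℝ) • z) z
      (hasFDerivAt_norm_rpow_smul β hz)).fderiv]
    simp [mul_assoc]
  constructor
  · rw [h1 x hx, real_inner_self_eq_norm_sq, p2, ← add_smul]
    have : ‖x‖ ^ β + β * (‖x‖ ^ β / ‖x‖ ^ 2 * ‖x‖ ^ 2) = (β + 1) * ‖x‖ ^ β := by
      field_simp; ring
    rw [this, mul_smul, ← hy, map_smul, smul_eq_mul]
  -- the chain rule for the second derivative in a fixed direction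
  have h2 : ∀ v, fderiv ℝ (fun z => fderiv ℝ u z v) x v =
      fderiv ℝ (fderiv ℝ W) y
        ((‖x‖ ^ β : ℝ) • v + (β * (‖x‖ ^ (β - 2) * ⟪x, v⟫)) • x)
        ((‖x‖ ^ β : ℝ) • v + (β * (‖x‖ ^ (β - 2) * ⟪x, v⟫)) • x)
      + fderiv ℝ W y ((2 * β * ‖x‖ ^ (β - 2) * ⟪x, v⟫) • v
        + (β * ((β - 2) * ‖x‖ ^ (β - 2 - 2) * ⟪x, v⟫ ^ 2 + ‖x‖ ^ (β - 2) * ⟪v, v⟫)) • x) := by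
    intro v
    have e : (fun z => fderiv ℝ u z v) =ᶠ[nhds x] fun z => fderiv ℝ W ((‖z‖ ^ β : ℝ) • z)
        ((‖z‖ ^ β : ℝ) • v + (β * (‖z‖ ^ (β - 2) * ⟪z, v⟫)) • z) := by
      filter_upwards [isOpen_compl_singleton.mem_nhds hx] with t ht using h1 t ht v
    have hA : HasFDerivAt (fun z : Euc d => fderiv ℝ W ((‖z‖ ^ β : ℝ) • z)) _ x :=
      (hasFDerivAt_fderiv_of_ne hW (hΦ x hx)).comp (f := fun z : Euc d => (‖z‖ ^ β : ℝ) • z) x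
        (hasFDerivAt_norm_rpow_smul β hx)
    have hi : HasFDerivAt (fun z : Euc d => ⟪z, v⟫) (innerSL ℝ v) x := by
      have := (innerSL ℝ v).hasFDerivAt (x := x)
      exact this.congr_of_eventuallyEq (.of_forall fun z => real_inner_comm _ _)
    have hB := ((hasFDerivAt_norm_rpow_of_ne β hx).smul_const v).add
      ((((hasFDerivAt_norm_rpow_of_ne (β - 2) hx).mul hi).const_mul β).smul (hasFDerivAt_id x))
    have hC := hA.clm_apply hB
    rw [e.fderiv_eq]
    refine (congrArg (fun L => L v) hC.fderiv).trans ?_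
    simp only [← hy]
    simp [real_inner_comm, mul_assoc]
    ring
  have hB2 := rD2_eq hW hy0
  have hB1 := rD_eq W y
  have hyx : ∀ L : Euc d →L[ℝ] ℝ, L y = ‖x‖ ^ β * L x := fun L => by rw [hy]; simp
  have hyy : fderiv ℝ (fderiv ℝ W) y y y
      = (‖x‖ ^ β) ^ 2 * fderiv ℝ (fderiv ℝ W) y x x := by
    rw [hyx, ← ContinuousLinearMap.flip_apply, hyx, ContinuousLinearMap.flip_apply]; ring
  rw [hyy] at hB2
  rw [hyx] at hB1
  have hE := eLap_eq hW hy0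
  generalize fderiv ℝ (fderiv ℝ W) y = B at *
  generalize fderiv ℝ W y = L at *
  have s1 := sum_inner_mul x (B x)
  have s2 := sum_inner_mul x (B.flip x)
  have s3 := sum_inner_mul x (innerSL ℝ x)
  have s4 := sum_inner_mul x L
  simp only [ContinuousLinearMap.flip_apply, innerSL_apply_apply,
    real_inner_self_eq_norm_sq] at s2 s3
  have s5 : ∀ i : Fin d, ⟪EuclideanSpace.single i (1 : ℝ), EuclideanSpace.single i (1 : ℝ)⟫
      = (1 : ℝ) := fun i => by simp
  rw [eLap]
  simp only [h2, s5]
  rw [hE, hB2, hB1, hs]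
  have : ∀ i : Fin d, B ((‖x‖ ^ β : ℝ) • EuclideanSpace.single i (1 : ℝ)
          + (β * (‖x‖ ^ (β - 2) * ⟪x, EuclideanSpace.single i (1 : ℝ)⟫)) • x)
        ((‖x‖ ^ β : ℝ) • EuclideanSpace.single i (1 : ℝ)
          + (β * (‖x‖ ^ (β - 2) * ⟪x, EuclideanSpace.single i (1 : ℝ)⟫)) • x)
      + L ((2 * β * ‖x‖ ^ (β - 2) * ⟪x, EuclideanSpace.single i (1 : ℝ)⟫)
          • EuclideanSpace.single i (1 : ℝ)
        + (β * ((β - 2) * ‖x‖ ^ (β - 2 - 2) * ⟪x, EuclideanSpace.single i (1 : ℝ)⟫ ^ 2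
          + ‖x‖ ^ (β - 2) * 1)) • x)
      = (‖x‖ ^ β) ^ 2 * B (EuclideanSpace.single i 1) (EuclideanSpace.single i 1)
        + ‖x‖ ^ β * β * ‖x‖ ^ (β - 2)
          * (⟪x, EuclideanSpace.single i (1 : ℝ)⟫ * B (EuclideanSpace.single i 1) x)
        + ‖x‖ ^ β * β * ‖x‖ ^ (β - 2)
          * (⟪x, EuclideanSpace.single i (1 : ℝ)⟫ * B x (EuclideanSpace.single i 1))
        + (β ^ 2 * (‖x‖ ^ (β - 2)) ^ 2 * B x x + β * (β - 2) * ‖x‖ ^ (β - 2 - 2) * L x)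
          * (⟪x, EuclideanSpace.single i (1 : ℝ)⟫ * ⟪x, EuclideanSpace.single i (1 : ℝ)⟫)
        + 2 * β * ‖x‖ ^ (β - 2)
          * (⟪x, EuclideanSpace.single i (1 : ℝ)⟫ * L (EuclideanSpace.single i 1))
        + β * ‖x‖ ^ (β - 2) * L x := by
    intro i
    simp only [map_add, map_smul, add_apply, smul_apply, smul_eq_mul]
    ring
  rw [Finset.sum_congr rfl fun i _ => this i]
  simp only [Finset.sum_add_distrib, ← Finset.mul_sum, s1, s2, s3, s4, Finset.sum_const,
    Finset.card_univ, Fintype.card_fin, nsmul_eq_mul]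
  rw [p2, p4]
  generalize ‖x‖ ^ β = ρ at *
  generalize ‖x‖ = r at *
  field_simp
  ring

/-! ### Minimum points and the cylinder equation -/

/-- First- and second-order necessary conditions at a global minimum over the punctured space.
If a pure second derivative were negative, the restriction to that line would have a local maximum
as well as a minimum, hence be locally constant, and the second derivative would vanish. -/
theorem eLap_nonneg_of_forall_le {d : ℕ} {u : Euc d → ℝ}
    (hu : ContDiffOn ℝ (⊤ : ℕ∞) u {(0 : Euc d)}ᶜ) {x : Euc d} (hx : x ≠ 0)
    (hmin : ∀ z : Euc d, z ≠ 0 → u x ≤ u z) : fderiv ℝ u x = 0 ∧ 0 ≤ eLap u x := by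
  have hloc : IsLocalMin u x := by
    filter_upwards [isOpen_compl_singleton.mem_nhds hx] with t ht using hmin t ht
  have h0 := hloc.fderiv_eq_zero
  refine ⟨h0, Finset.sum_nonneg fun i _ => ?_⟩
  set v : Euc d := EuclideanSpace.single i 1
  by_contra! hneg
  have hline : ∀ t : ℝ, HasDerivAt (fun t : ℝ => x + t • v) v t := fun t => by
    simpa using ((hasDerivAt_id t).smul_const v).const_add x
  have hcont : ContinuousAt (fun t : ℝ => x + t • v) 0 := (hline 0).continuousAt
  have hz0 : x + (0 : ℝ) • v = x := by simp
  have hne : ∀ᶠ t : ℝ in nhds 0, x + t • v ≠ 0 :=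
    hcont.eventually_ne (by simpa using hx)
  have hd : ∀ t : ℝ, x + t • v ≠ 0 →
      HasDerivAt (fun t : ℝ => u (x + t • v)) (fderiv ℝ u (x + t • v) v) t := fun t ht =>
    (hasFDerivAt_of_ne hu ht).comp_hasDerivAt t (hline t)
  have hd1 : deriv (fun t : ℝ => u (x + t • v)) =ᶠ[nhds 0] fun t => fderiv ℝ u (x + t • v) v := by
    filter_upwards [hne] with t ht using (hd t ht).deriv
  have hd2 : deriv (deriv fun t : ℝ => u (x + t • v)) 0
      = fderiv ℝ (fun y => fderiv ℝ u y v) x v := by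
    rw [hd1.deriv_eq]
    have hD : HasFDerivAt (fun y => fderiv ℝ u y v) (fderiv ℝ (fun y => fderiv ℝ u y v) x)
        (x + (0 : ℝ) • v) := by
      rw [hz0]
      exact ((hasFDerivAt_fderiv_of_ne hu hx).clm_apply
        (hasFDerivAt_const v x)).differentiableAt.hasFDerivAt
    exact (hD.comp_hasDerivAt 0 (hline 0)).deriv
  have hmax := isLocalMax_of_deriv_deriv_neg (f := fun t : ℝ => u (x + t • v)) (x₀ := 0)
    (by rw [hd2]; exact hneg) (by rw [hd1.eq_of_nhds]; simp [h0])
    (hd 0 (by simpa using hx)).continuousAt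
  have hconst : (fun t : ℝ => u (x + t • v)) =ᶠ[nhds 0] fun _ => u x := by
    filter_upwards [hmax, hne] with t ht ht'
    exact le_antisymm (by simpa using ht) (hmin _ ht')
  have hz : deriv (deriv fun t : ℝ => u (x + t • v)) 0 = 0 := by
    rw [hconst.deriv.deriv_eq]; simp
  rw [hd2] at hz
  exact hneg.ne hz

/-- **Lemma (cylinder equation).** If `u` is a positive solution on `ℝ^d \ {0}` and `w`
its cylinder representation, then `w` is a positive solution of `-𝓛w = w^{p-1}` on
`(0,∞)×S^{d-1}`, and moreover `p = 2n/(n-2)`. -/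
theorem cylinder_equation (d : ℕ) (a b : ℝ) (u W : Euc d → ℝ)
    (hadm : Admissible d a b)
    (hupos : ∀ x : Euc d, x ≠ 0 → 0 < u x)
    (husol : IsCKNSolution d a b (pCKN d a b) u)
    (hW : IsCylinderRep (alphaCKN d a b) u W) :
    (∀ x : Euc d, x ≠ 0 → 0 < W x) ∧
      (∀ x : Euc d, x ≠ 0 →
        -cylL (alphaCKN d a b) (nCKN d a b) W x = W x ^ (pCKN d a b - 1)) ∧
      pCKN d a b = 2 * nCKN d a b / (nCKN d a b - 2) := by
  obtain ⟨hWs, huW⟩ := hW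
  obtain ⟨hus, heq⟩ := husol
  obtain ⟨hab, hac⟩ := hadm
  have hd2 : 2 ≤ d := by omega
  have hd2' : (2 : ℝ) ≤ d := by exact_mod_cast hd2
  have hba : b ≤ a + 1 := by rcases hab with h | h <;> exact h.2.2
  have hD : 0 < acrit d - a + b := by
    unfold acrit
    rcases hab with ⟨h3, h, -⟩ | ⟨h3, h, -⟩
    · have : (3 : ℝ) ≤ d := by exact_mod_cast h3
      linarith
    · linarith
  rcases hba.lt_or_eq with hlt | hbeq
  · have hk : 0 < 1 + a - b := by linarith
    have hα : 0 < alphaCKN d a b := div_pos (mul_pos hk (by linarith)) hD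
    have hp : pCKN d a b = d / (acrit d - a + b) := by
      unfold pCKN acrit at *
      rw [div_eq_div_iff (by linarith) (by linarith)]; ring
    have hn : nCKN d a b - 2 = 2 * (acrit d - a + b) / (1 + a - b) := by
      unfold nCKN acrit; field_simp; ring
    have hαn : alphaCKN d a b * (nCKN d a b - 2) = 2 * (acrit d - a) := by
      rw [hn, alphaCKN]; field_simp
    have hbp : -(b * pCKN d a b) = -(2 * a) + 2 * (alphaCKN d a b - 1) := by
      rw [hp, alphaCKN]
      field_simp
      unfold acrit; ring
    -- the radial change of variables is onto the punctured space
    have hsurj : ∀ y : Euc d, y ≠ 0 → ∃ x : Euc d, x ≠ 0 ∧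
        y = (‖x‖ ^ (alphaCKN d a b - 1) : ℝ) • x := by
      intro y hy
      have hs : 0 < ‖y‖ := norm_pos_iff.mpr hy
      have hc : 0 < ‖y‖ ^ (1 / alphaCKN d a b - 1) := Real.rpow_pos_of_pos hs _
      refine ⟨(‖y‖ ^ (1 / alphaCKN d a b - 1) : ℝ) • y, smul_ne_zero hc.ne' hy, ?_⟩
      have hnorm : ‖(‖y‖ ^ (1 / alphaCKN d a b - 1) : ℝ) • y‖ = ‖y‖ ^ (1 / alphaCKN d a b) := by
        rw [norm_smul, Real.norm_of_nonneg hc.le, Real.rpow_sub_one hs.ne']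
        field_simp
      rw [hnorm, smul_smul, ← Real.rpow_mul hs.le, ← Real.rpow_add hs]
      have : 1 / alphaCKN d a b * (alphaCKN d a b - 1) + (1 / alphaCKN d a b - 1) = 0 := by
        field_simp; ring
      rw [this, Real.rpow_zero, one_smul]
    refine ⟨fun y hy => ?_, fun y hy => ?_, ?_⟩
    · obtain ⟨x, hx, rfl⟩ := hsurj y hy
      rw [← huW x hx]; exact hupos x hx
    · obtain ⟨x, hx, hyx⟩ := hsurj y hy
      have hr : 0 < ‖x‖ := norm_pos_iff.mpr hx
      have hs : 0 < ‖y‖ := norm_pos_iff.mpr hy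
      have hρ : 0 < ‖x‖ ^ (alphaCKN d a b - 1) := Real.rpow_pos_of_pos hr _
      have hnorm : ‖y‖ = ‖x‖ ^ (alphaCKN d a b - 1) * ‖x‖ := by
        rw [hyx, norm_smul, Real.norm_of_nonneg hρ.le]
      obtain ⟨g1, g2⟩ := eLap_comp _ hWs huW hx hyx
      have h := heq x hx
      have hx2 : fderiv ℝ W y y = ‖y‖ * rD W y := by
        rw [rD_eq]; field_simp
      have q1 : ‖x‖ ^ (-(b * pCKN d a b))
          = ‖x‖ ^ (-(2 * a)) * (‖x‖ ^ (alphaCKN d a b - 1)) ^ 2 := by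
        rw [hbp, Real.rpow_add hr, mul_comm (2 : ℝ) (alphaCKN d a b - 1), Real.rpow_mul hr.le,
          Real.rpow_two]
      have q2 : ‖x‖ ^ (-(2 * a) - 2) = ‖x‖ ^ (-(2 * a)) / ‖x‖ ^ 2 := by
        rw [Real.rpow_sub hr, Real.rpow_two]
      have hσ : 0 < ‖x‖ ^ (-(2 * a)) := Real.rpow_pos_of_pos hr _
      have hcoef : alphaCKN d a b ^ 2 * (nCKN d a b - 1)
          = alphaCKN d a b ^ 2 + alphaCKN d a b * (d - 2 - 2 * a) := by
        have : (d : ℝ) - 2 - 2 * a = 2 * (acrit d - a) := by unfold acrit; ring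
        rw [this, ← hαn]; ring
      rw [divg_norm_rpow_smul_gradient _ hus hx, g1, g2, huW x hx, ← hyx, q1, q2, hx2] at h
      rw [cylL, sphLapR2, hcoef]
      rw [hnorm] at h ⊢
      generalize ‖x‖ ^ (alphaCKN d a b - 1) = ρ at *
      generalize ‖x‖ ^ (-(2 * a)) = σ at *
      generalize ‖x‖ = r at *
      generalize W y ^ (pCKN d a b - 1) = P at *
      generalize alphaCKN d a b = α at *
      -- the equation for `u` is `σρ²` times the equation for `W`
      refine neg_eq_of_add_eq_zero_right
        ((mul_eq_zero.mp (Eq.trans ?_ h)).resolve_left (mul_pos hσ (pow_pos hρ 2)).ne')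
      field_simp
      ring
    · have hn2 : 0 < nCKN d a b - 2 := by rw [hn]; positivity
      rw [eq_div_iff hn2.ne', hn, hp, nCKN]
      field_simp
  · -- for `b = a + 1` the exponent `α` vanishes, so `u` is `0`-homogeneous: no positive solution
    exfalso
    have hα : alphaCKN d a b = 0 := by rw [alphaCKN, show 1 + a - b = 0 by linarith, zero_mul, zero_div]
    have : Nonempty (Fin d) := ⟨⟨0, by omega⟩⟩
    obtain ⟨x, hxs, hxmin⟩ := (isCompact_sphere (0 : Euc d) 1).exists_isMinOn
      (NormedSpace.sphere_nonempty.mpr zero_le_one)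
      (hus.continuousOn.mono fun z hz => ne_zero_of_mem_unit_sphere (⟨z, hz⟩ : sphere _ _))
    have hx : x ≠ 0 := ne_zero_of_mem_unit_sphere (⟨x, hxs⟩ : sphere _ _)
    have hmin : ∀ z : Euc d, z ≠ 0 → u x ≤ u z := by
      intro z hz
      have hz1 : ‖(‖z‖⁻¹ : ℝ) • z‖ = 1 := by
        rw [norm_smul, norm_inv, norm_norm, inv_mul_cancel₀ (norm_ne_zero_iff.mpr hz)]
      have hz2 : (‖z‖⁻¹ : ℝ) • z ≠ 0 := by rw [← norm_ne_zero_iff, hz1]; exact one_ne_zero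
      have : u z = u ((‖z‖⁻¹ : ℝ) • z) := by
        rw [huW z hz, huW _ hz2, hz1, hα]
        simp [Real.rpow_neg_one]
      rw [this]
      exact hxmin (by simpa using hz1)
    obtain ⟨k1, k2⟩ := eLap_nonneg_of_forall_le hus hx hmin
    have h := heq x hx
    rw [divg_norm_rpow_smul_gradient _ hus hx, k1] at h
    have hr : 0 < ‖x‖ := norm_pos_iff.mpr hx
    have hu := hupos x hx
    have t1 : 0 ≤ ‖x‖ ^ (-(2 * a)) * eLap u x := by positivity
    have t2 : 0 < ‖x‖ ^ (-(b * pCKN d a b)) * u x ^ (pCKN d a b - 1) := by positivity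
    simp at h
    linarith
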